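/- Let Ω and X be compact metric spaces and let Φ be a skew-product transformation on Ω×X with continuous base φ: Ω → Ω satisfying condition (H). Let a ∈ ℝ and let f: Ω×X → ℝ be a bounded Borel measurable function such that μ(D_f) = 0 and ∫_{Ω×X} f dμ ≤ a for every Φ-invariant Borel probability measure μ on Ω×X. Then for every ε > 0 there exists N ∈ ℕ such that for all n ≥ N and all (ω,x) ∈ Ω×X, (1/n) Σ_{i=0}^{n-1} f(Φ^i(ω,x)) ≤ a + ε. -/

import Mathlib

open MeasureTheory Filter Topology

/-!
If the bound fails, there are orbit segments of length tending to infinity along which the average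
of `f` exceeds `a + ε`. Let `μ` be a weak limit of the empirical measures of these segments. A weak
limit of empirical measures is invariant provided the map is continuous almost everywhere for the
limit, so invariance is obtained in two rounds: the projection of `μ` to the base is `φ`-invariant
because `φ` is continuous, condition (H) then says that `μ` does not charge the discontinuities of
the skew product, and hence `μ` itself is invariant. Since `μ` does not charge the discontinuities
of `f` either, the averages of `f` converge to `∫ f dμ ≤ a`, a contradiction.
-/

open scoped BoundedContinuousFunction ENNReal

section AlmostEverywhereContinuous

variable {Y Z ι : Type*} [TopologicalSpace Y] [TopologicalSpace Z]

theorem closure_preimage_subset_union_not_continuousAt {F : Set Z} (hF : IsClosed F) (T : Y → Z) :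
    closure (T ⁻¹' F) ⊆ T ⁻¹' F ∪ {y | ¬ ContinuousAt T y} := by
  intro y hy
  refine or_iff_not_imp_right.2 fun hTy ↦ ?_
  have hcont : ContinuousAt T y := not_not.1 hTy
  exact hF.closure_subset_iff.2 (Set.image_preimage_subset T F)
    (hcont.continuousWithinAt.mem_closure_image hy)

variable [MeasurableSpace Y] [OpensMeasurableSpace Y] [HasOuterApproxClosed Y]
  {L : Filter ι} [L.IsCountablyGenerated]
  {μs : ι → ProbabilityMeasure Y} {μ : ProbabilityMeasure Y}

theorem tendsto_map_of_tendsto_of_ae_continuousAt [MeasurableSpace Z] [OpensMeasurableSpace Z]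
    {T : Y → Z} (hT : Measurable T) (hμ : Tendsto μs L (𝓝 μ))
    (hcont : ∀ᵐ y ∂(μ : Measure Y), ContinuousAt T y) :
    Tendsto (fun i ↦ (μs i).map hT.aemeasurable) L (𝓝 (μ.map hT.aemeasurable)) := by
  refine tendsto_of_forall_isClosed_limsup_le' fun F hF ↦ ?_
  simp only [ProbabilityMeasure.toMeasure_map, Measure.map_apply hT hF.measurableSet]
  calc limsup (fun i ↦ (μs i : Measure Y) (T ⁻¹' F)) L
      ≤ limsup (fun i ↦ (μs i : Measure Y) (closure (T ⁻¹' F))) L :=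
        limsup_le_limsup (.of_forall fun _ ↦ measure_mono subset_closure)
    _ ≤ (μ : Measure Y) (closure (T ⁻¹' F)) :=
        ProbabilityMeasure.limsup_measure_closed_le_of_tendsto hμ isClosed_closure
    _ ≤ (μ : Measure Y) (T ⁻¹' F ∪ {y | ¬ ContinuousAt T y}) :=
        measure_mono (closure_preimage_subset_union_not_continuousAt hF T)
    _ = (μ : Measure Y) (T ⁻¹' F) :=
        measure_congr (union_ae_eq_left_of_ae_eq_empty (ae_eq_empty.2 (ae_iff.1 hcont)))

theorem tendsto_integral_of_tendsto_of_ae_continuousAt {f : Y → ℝ} (hf : Measurable f) {C : ℝ}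
    (hC : ∀ y, |f y| ≤ C) (hμ : Tendsto μs L (𝓝 μ))
    (hcont : ∀ᵐ y ∂(μ : Measure Y), ContinuousAt f y) :
    Tendsto (fun i ↦ ∫ y, f y ∂(μs i : Measure Y)) L (𝓝 (∫ y, f y ∂(μ : Measure Y))) := by
  let clamp : ℝ →ᵇ ℝ := .ofNormedAddCommGroup (fun t ↦ max (-|C|) (min |C| t)) (by fun_prop) |C|
    fun t ↦ abs_le.2 ⟨le_max_left _ _, max_le (neg_le_self (abs_nonneg C)) (min_le_left _ _)⟩
  have clamp_f (y : Y) : clamp (f y) = f y := by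
    obtain ⟨hlower, hupper⟩ := abs_le.1 ((hC y).trans (le_abs_self C))
    change max (-|C|) (min |C| (f y)) = f y
    rw [min_eq_right hupper, max_eq_right hlower]
  have integral_clamp (ν : ProbabilityMeasure Y) :
      ∫ t, clamp t ∂(ν.map hf.aemeasurable : Measure ℝ) = ∫ y, f y ∂(ν : Measure Y) := by
    rw [ProbabilityMeasure.toMeasure_map, integral_map hf.aemeasurable
      clamp.continuous.aestronglyMeasurable]
    simp only [clamp_f]
  simpa only [integral_clamp] using ProbabilityMeasure.tendsto_iff_forall_integral_tendsto.1
    (tendsto_map_of_tendsto_of_ae_continuousAt hf hμ hcont) clamp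

end AlmostEverywhereContinuous

/-- A family of probability measures is asymptotically invariant under `T` along a filter if the
difference between its push-forwards by `T` and the family itself tends weakly to zero. Limits of
such families are the source of invariant measures. -/
def AsymptoticallyInvariant {Y ι : Type*} [TopologicalSpace Y] [MeasurableSpace Y] (T : Y → Y)
    (μs : ι → ProbabilityMeasure Y) (L : Filter ι) : Prop :=
  ∀ g : Y →ᵇ ℝ,
    Tendsto (fun i ↦ ∫ y, g (T y) ∂(μs i : Measure Y) - ∫ y, g y ∂(μs i : Measure Y)) L (𝓝 0)

namespace AsymptoticallyInvariant

variable {Y Z ι : Type*} [TopologicalSpace Y] [MeasurableSpace Y] [TopologicalSpace Z]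
  [MeasurableSpace Z] [BorelSpace Z] {T : Y → Y} {S : Z → Z} {p : Y → Z}
  {μs : ι → ProbabilityMeasure Y} {μ : ProbabilityMeasure Y} {L : Filter ι}

theorem comp (h : AsymptoticallyInvariant T μs L) {κ : Type*} {u : κ → ι} {L' : Filter κ}
    (hu : Tendsto u L' L) : AsymptoticallyInvariant T (μs ∘ u) L' :=
  fun g ↦ (h g).comp hu

theorem map_of_semiconj [OpensMeasurableSpace Y] (h : AsymptoticallyInvariant T μs L)
    (hp : Continuous p) (hS : Measurable S) (hpTS : Function.Semiconj p T S) :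
    AsymptoticallyInvariant S (fun i ↦ (μs i).map hp.measurable.aemeasurable) L := by
  intro g
  refine (h (g.compContinuous ⟨p, hp⟩)).congr fun i ↦ ?_
  rw [ProbabilityMeasure.toMeasure_map,
    integral_map hp.measurable.aemeasurable g.continuous.aestronglyMeasurable,
    integral_map (f := fun z ↦ g (S z)) hp.measurable.aemeasurable
      (g.continuous.measurable.comp hS).aestronglyMeasurable]
  simp only [BoundedContinuousFunction.compContinuous_apply, ContinuousMap.coe_mk, hpTS.eq]

variable [BorelSpace Y] [HasOuterApproxClosed Y] [L.NeBot] [L.IsCountablyGenerated]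

theorem measurePreserving_of_tendsto (h : AsymptoticallyInvariant T μs L) (hT : Measurable T)
    (hμ : Tendsto μs L (𝓝 μ)) (hcont : ∀ᵐ y ∂(μ : Measure Y), ContinuousAt T y) :
    MeasurePreserving T (μ : Measure Y) μ := by
  have tendsto_map_self : Tendsto (fun i ↦ (μs i).map hT.aemeasurable) L (𝓝 μ) := by
    refine ProbabilityMeasure.tendsto_iff_forall_integral_tendsto.2 fun g ↦ ?_
    have hsum := (h g).add (ProbabilityMeasure.tendsto_iff_forall_integral_tendsto.1 hμ g)
    simpa only [ProbabilityMeasure.toMeasure_map, sub_add_cancel, zero_add,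
      integral_map hT.aemeasurable g.continuous.aestronglyMeasurable] using hsum
  exact ⟨hT, congrArg ProbabilityMeasure.toMeasure <| tendsto_nhds_unique
    (tendsto_map_of_tendsto_of_ae_continuousAt hT hμ hcont) tendsto_map_self⟩

theorem measurePreserving_of_tendsto_of_semiconj [HasOuterApproxClosed Z]
    (h : AsymptoticallyInvariant T μs L) (hT : Measurable T) (hμ : Tendsto μs L (𝓝 μ))
    (hp : Continuous p) (hS : Continuous S) (hpTS : Function.Semiconj p T S)
    (hnull : ∀ ν : Measure Z, IsProbabilityMeasure ν → MeasurePreserving S ν ν →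
      ν (p '' {y | ¬ ContinuousAt T y}) = 0) :
    MeasurePreserving T (μ : Measure Y) μ := by
  have map_invariant := (h.map_of_semiconj hp hS.measurable hpTS).measurePreserving_of_tendsto
    hS.measurable (ProbabilityMeasure.tendsto_map_of_tendsto_of_continuous _ _ hμ hp)
    (.of_forall fun _ ↦ hS.continuousAt)
  have map_null := hnull _ inferInstance map_invariant
  rw [ProbabilityMeasure.toMeasure_map] at map_null
  refine h.measurePreserving_of_tendsto hT hμ (ae_iff.2 ?_)
  exact measure_mono_null (Set.subset_preimage_image p _)
    (Measure.preimage_null_of_map_null hp.measurable.aemeasurable map_null)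

end AsymptoticallyInvariant

section EmpiricalMeasure

variable {Y : Type*} [MeasurableSpace Y]

/-- The empirical measure of the orbit segment `y, T y, …, T^[n - 1] y`: the uniform average of the
Dirac masses at these points, whose integrals are the Birkhoff averages. -/
noncomputable def empiricalMeasure (T : Y → Y) (n : ℕ) [NeZero n] (y : Y) :
    ProbabilityMeasure Y where
  val := (n : ℝ≥0∞)⁻¹ • ∑ i ∈ Finset.range n, Measure.dirac (T^[i] y)
  property := ⟨by
    simp [ENNReal.inv_mul_cancel (Nat.cast_ne_zero.2 (NeZero.ne n)) (ENNReal.natCast_ne_top n)]⟩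

theorem integral_empiricalMeasure [MeasurableSingletonClass Y] {E : Type*} [NormedAddCommGroup E]
    [NormedSpace ℝ E] [CompleteSpace E] (T : Y → Y) (n : ℕ) [NeZero n] (y : Y) (g : Y → E) :
    ∫ x, g x ∂(empiricalMeasure T n y : Measure Y) = birkhoffAverage ℝ T g n y := by
  change ∫ x, g x ∂((n : ℝ≥0∞)⁻¹ • ∑ i ∈ Finset.range n, Measure.dirac (T^[i] y)) = _
  rw [integral_smul_measure, integral_finsetSum_measure fun i _ ↦ integrable_dirac (by simp)]
  simp [birkhoffAverage, birkhoffSum]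

theorem asymptoticallyInvariant_empiricalMeasure [MeasurableSingletonClass Y] [TopologicalSpace Y]
    {ι : Type*} {L : Filter ι} (T : Y → Y) {n : ι → ℕ} [∀ i, NeZero (n i)]
    (hn : Tendsto n L atTop) (y : ι → Y) :
    AsymptoticallyInvariant T (fun i ↦ empiricalMeasure T (n i) (y i)) L := by
  intro g
  have bound_tendsto : Tendsto (fun i ↦ 2 * ‖g‖ / n i) L (𝓝 0) :=
    tendsto_const_nhds.div_atTop (tendsto_natCast_atTop_atTop.comp hn)
  refine squeeze_zero_norm (fun i ↦ ?_) bound_tendsto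
  have average_comp : birkhoffAverage ℝ T (fun x ↦ g (T x)) (n i) (y i) =
      birkhoffAverage ℝ T g (n i) (T (y i)) := by
    simp only [birkhoffAverage, birkhoffSum, ← Function.iterate_succ_apply,
      ← Function.iterate_succ_apply']
  rw [integral_empiricalMeasure, integral_empiricalMeasure, average_comp, ← dist_eq_norm,
    dist_birkhoffAverage_apply_birkhoffAverage]
  gcongr
  exact g.dist_le_two_norm _ _

end EmpiricalMeasure

theorem semi_uniform_ergodic_theorem_SPT_le_general {Y Z : Type*}
    [TopologicalSpace Y] [CompactSpace Y] [TopologicalSpace.MetrizableSpace Y]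
    [MeasurableSpace Y] [BorelSpace Y]
    [TopologicalSpace Z] [HasOuterApproxClosed Z] [MeasurableSpace Z] [BorelSpace Z]
    {T : Y → Y} {S : Z → Z} {p : Y → Z} (hT : Measurable T) (hS : Continuous S)
    (hp : Continuous p) (hpTS : Function.Semiconj p T S)
    (hnull : ∀ ν : Measure Z, IsProbabilityMeasure ν → MeasurePreserving S ν ν →
      ν (p '' {y | ¬ ContinuousAt T y}) = 0)
    {a : ℝ} {f : Y → ℝ} (hf : Measurable f) (hfbdd : ∃ C : ℝ, ∀ y, |f y| ≤ C)
    (hfint : ∀ μ : Measure Y, IsProbabilityMeasure μ → MeasurePreserving T μ μ →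
      μ {y | ¬ ContinuousAt f y} = 0 ∧ ∫ y, f y ∂μ ≤ a) {ε : ℝ} (hε : 0 < ε) :
    ∀ᶠ n in atTop, ∀ y, birkhoffAverage ℝ T f n y ≤ a + ε := by
  by_contra hfail
  have frequently_large : ∃ᶠ n in atTop, (∃ y, a + ε < birkhoffAverage ℝ T f n y) ∧ n ≠ 0 := by
    simp only [not_eventually, not_forall, not_le] at hfail
    exact hfail.and_eventually (eventually_ne_atTop 0)
  obtain ⟨n, hn, hlarge⟩ := exists_seq_forall_of_frequently frequently_large
  choose y hy using fun k ↦ (hlarge k).1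
  have (k : ℕ) : NeZero (n k) := ⟨(hlarge k).2⟩
  obtain ⟨μ, u, hu, hμ⟩ :=
    SeqCompactSpace.tendsto_subseq fun k ↦ empiricalMeasure T (n k) (y k)
  have μ_invariant : MeasurePreserving T (μ : Measure Y) μ :=
    ((asymptoticallyInvariant_empiricalMeasure T hn y).comp
      hu.tendsto_atTop).measurePreserving_of_tendsto_of_semiconj hT hμ hp hS hpTS hnull
  obtain ⟨hfcont, hfle⟩ := hfint μ inferInstance μ_invariant
  obtain ⟨C, hC⟩ := hfbdd
  have le_integral : a + ε ≤ ∫ x, f x ∂(μ : Measure Y) := by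
    refine ge_of_tendsto' (tendsto_integral_of_tendsto_of_ae_continuousAt hf hC hμ
      (ae_iff.2 hfcont)) fun k ↦ ?_
    simpa only [Function.comp_apply, integral_empiricalMeasure] using (hy (u k)).le
  linarith

/-- Semi-uniform ergodic theorem (upper bound) for skew-product transformations with
discontinuous observation functions. -/
theorem semi_uniform_ergodic_theorem_SPT_le
    {Ω X : Type*}
    [MetricSpace Ω] [CompactSpace Ω] [MeasurableSpace Ω] [BorelSpace Ω]
    [MetricSpace X] [CompactSpace X] [MeasurableSpace X] [BorelSpace X]
    (φ : Ω → Ω) (hφ : Continuous φ)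
    (Φ : Ω × X → Ω × X) (hΦmeas : Measurable Φ)
    (hbase : ∀ p : Ω × X, (Φ p).1 = φ p.1)
    (hH : ∀ ν : Measure Ω, IsProbabilityMeasure ν →
      (∀ s : Set Ω, MeasurableSet s → ν (φ ⁻¹' s) = ν s) →
      ν (Prod.fst '' {p : Ω × X | ¬ ContinuousAt Φ p}) = 0)
    (a : ℝ) (f : Ω × X → ℝ) (hfmeas : Measurable f)
    (hfbdd : ∃ C : ℝ, ∀ p, |f p| ≤ C)
    (hf : ∀ μ : Measure (Ω × X), IsProbabilityMeasure μ →
      (∀ s : Set (Ω × X), MeasurableSet s → μ (Φ ⁻¹' s) = μ s) →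
      μ {p : Ω × X | ¬ ContinuousAt f p} = 0 ∧ ∫ p, f p ∂μ ≤ a) :
    ∀ ε > (0 : ℝ), ∃ N : ℕ, ∀ n ≥ N, ∀ p : Ω × X,
      (n : ℝ)⁻¹ * ∑ i ∈ Finset.range n, f (Φ^[i] p) ≤ a + ε := by
  intro ε hε
  exact eventually_atTop.1 <| semi_uniform_ergodic_theorem_SPT_le_general hΦmeas hφ
    continuous_fst hbase (fun ν hν h ↦ hH ν hν fun _ hs ↦ h.measure_preimage hs.nullMeasurableSet)
    hfmeas hfbdd (fun μ hμ h ↦ hf μ hμ fun _ hs ↦ h.measure_preimage hs.nullMeasurableSet) hε
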